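/- Let T be an action of ℤ^d on a nonempty compact metric space X, let E' ⊆ X be closed and F ⊆ X open, and suppose that 4·μ(E') < μ(F) for every T-invariant Borel probability measure μ on X. Then there exists N ∈ ℕ such that for every integer M > N and every x ∈ X, 4·#{m ∈ {0,1,…,M−1}^d : T^{-m}x ∈ E'} < #{m ∈ {0,1,…,M−1}^d : T^{-m}x ∈ F}. -/

import Mathlib

open MeasureTheory

/-!
The orbit of `x` along the window `{0, …, M - 1}^d` has an empirical measure on `X`. If the
comparison failed for arbitrarily large `M`, some weak limit of bad empirical measures would exist
along an ultrafilter, as the probability measures on a compact space form a compact space. The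
windows form a Følner sequence, so this limit is invariant under the action. By the portmanteau
theorem, the mass of a closed set can only increase in the limit and that of an open set can only
decrease, so the failure passes to the limit and contradicts the hypothesis on invariant measures.
-/

open Filter ProbabilityTheory Topology
open scoped Finset Pointwise symmDiff ENNReal NNReal BoundedContinuousFunction

section FoelnerAverages

theorem norm_setIntegral_sub_setIntegral_le {Y E : Type*} [MeasurableSpace Y]
    [NormedAddCommGroup E] [NormedSpace ℝ E] {m : Measure Y} {A B : Set Y} {φ : Y → E} {C : ℝ}
    (hA : MeasurableSet A) (hB : MeasurableSet B) (hmA : m A ≠ ∞) (hmB : m B ≠ ∞)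
    (hφ : AEStronglyMeasurable φ m) (hC : ∀ y, ‖φ y‖ ≤ C) :
    ‖∫ y in A, φ y ∂m - ∫ y in B, φ y ∂m‖ ≤ C * m.real (A ∆ B) := by
  have integrableOn {S : Set Y} (hS : m S ≠ ∞) : IntegrableOn φ S m :=
    Measure.integrableOn_of_bounded hS hφ (Eventually.of_forall hC)
  have norm_le {S T : Set Y} (hS : m S ≠ ∞) : ‖∫ y in S \ T, φ y ∂m‖ ≤ C * m.real (S \ T) :=
    norm_setIntegral_le_of_norm_le_const
      ((measure_mono Set.sdiff_subset).trans_lt hS.lt_top) fun y _ ↦ hC y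
  have cancel : ∫ y in A, φ y ∂m - ∫ y in B, φ y ∂m
      = ∫ y in A \ B, φ y ∂m - ∫ y in B \ A, φ y ∂m := by
    rw [← integral_inter_add_sdiff hB (integrableOn hmA),
      ← integral_inter_add_sdiff hA (integrableOn hmB), Set.inter_comm B A,
      add_sub_add_left_eq_sub]
  calc ‖∫ y in A, φ y ∂m - ∫ y in B, φ y ∂m‖
      ≤ ‖∫ y in A \ B, φ y ∂m‖ + ‖∫ y in B \ A, φ y ∂m‖ := cancel ▸ norm_sub_le _ _
    _ ≤ C * m.real (A \ B) + C * m.real (B \ A) := add_le_add (norm_le hmA) (norm_le hmB)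
    _ = C * m.real (A ∆ B) := by rw [measureReal_symmDiff_eq hA hB hmA hmB, mul_add]

variable {G Y ι : Type*} [AddGroup G] [AddAction G Y] [MeasurableSpace Y]
  [MeasurableConstVAdd G Y] {m : Measure Y} [VAddInvariantMeasure G Y m]

theorem setIntegral_comp_vadd {E : Type*} [NormedAddCommGroup E] [NormedSpace ℝ E]
    (g : G) (A : Set Y) (φ : Y → E) :
    ∫ y in A, φ (g +ᵥ y) ∂m = ∫ y in g +ᵥ A, φ y ∂m :=
  ((measurePreserving_vadd g m).setIntegral_image_emb (measurableEmbedding_const_vadd g) φ A).symm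

theorem norm_setAverage_comp_vadd_sub_setAverage_le {E : Type*} [NormedAddCommGroup E]
    [NormedSpace ℝ E] {A : Set Y} {φ : Y → E} {C : ℝ} (hA : MeasurableSet A) (hmA : m A ≠ ∞)
    (hφ : AEStronglyMeasurable φ m) (hC : ∀ y, ‖φ y‖ ≤ C) (g : G) :
    ‖⨍ y in A, φ (g +ᵥ y) ∂m - ⨍ y in A, φ y ∂m‖ ≤
      C * (m ((g +ᵥ A) ∆ A) / m A).toReal := by
  have norm_setIntegral_le :
      ‖∫ y in g +ᵥ A, φ y ∂m - ∫ y in A, φ y ∂m‖ ≤ C * m.real ((g +ᵥ A) ∆ A) :=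
    norm_setIntegral_sub_setIntegral_le (hA.const_vadd g) hA (by rwa [measure_vadd]) hmA hφ hC
  rw [setAverage_eq, setAverage_eq, setIntegral_comp_vadd, ← smul_sub, norm_smul, norm_inv,
    Real.norm_of_nonneg measureReal_nonneg, ENNReal.toReal_div, ← mul_div_assoc, inv_mul_eq_div]
  exact div_le_div_of_nonneg_right norm_setIntegral_le measureReal_nonneg

theorem tendsto_setAverage_comp_vadd_sub_setAverage {E : Type*} [NormedAddCommGroup E]
    [NormedSpace ℝ E] {l : Filter ι} {Q : ι → Set Y} (hQ : IsAddFoelner G m l Q)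
    {φ : ι → Y → E} {C : ℝ} (hφ : ∀ i, AEStronglyMeasurable (φ i) m) (hC : ∀ i y, ‖φ i y‖ ≤ C)
    (g : G) :
    Tendsto (fun i ↦ ⨍ y in Q i, φ i (g +ᵥ y) ∂m - ⨍ y in Q i, φ i y ∂m) l (𝓝 0) := by
  have ratio : Tendsto (fun i ↦ C * (m ((g +ᵥ Q i) ∆ Q i) / m (Q i)).toReal) l (𝓝 0) := by
    simpa using ((ENNReal.tendsto_toReal ENNReal.zero_ne_top).comp
      (hQ.tendsto_meas_vadd_symmDiff g)).const_mul C
  refine squeeze_zero_norm' ?_ ratio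
  filter_upwards [hQ.eventually_measurableSet, hQ.eventually_meas_ne_top] with i hmeas hfin
  exact norm_setAverage_comp_vadd_sub_setAverage_le hmeas hfin (hφ i) (hC i) g

end FoelnerAverages

section WeakLimits

variable {X ι : Type*} [TopologicalSpace X] [HasOuterApproxClosed X] [MeasurableSpace X]
  {l : Filter ι} [l.NeBot] {ν : ι → ProbabilityMeasure X} {μ : ProbabilityMeasure X}

theorem map_eq_self_of_tendsto [BorelSpace X] {S : X → X} (hS : Continuous S)
    (hν : Tendsto ν l (𝓝 μ))
    (h : ∀ f : X →ᵇ ℝ,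
      Tendsto (fun i ↦ ∫ z, f (S z) ∂(ν i : Measure X) - ∫ z, f z ∂(ν i : Measure X)) l (𝓝 0)) :
    (μ : Measure X).map S = μ := by
  have integral_tendsto := ProbabilityMeasure.tendsto_iff_forall_integral_tendsto.1 hν
  have := Measure.isProbabilityMeasure_map (μ := (μ : Measure X)) hS.aemeasurable
  refine ext_of_forall_integral_eq_of_IsFiniteMeasure fun f ↦ ?_
  rw [integral_map hS.aemeasurable f.continuous.aestronglyMeasurable]
  exact sub_eq_zero.1 <| tendsto_nhds_unique
    ((integral_tendsto (f.compContinuous ⟨S, hS⟩)).sub (integral_tendsto f)) (h f)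

theorem measure_open_le_mul_measure_closed_of_tendsto [OpensMeasurableSpace X] {E F : Set X}
    (hE : IsClosed E) (hF : IsOpen F) {c : ℝ≥0} (hν : Tendsto ν l (𝓝 μ))
    (h : ∀ᶠ i in l, (ν i : Measure X) F ≤ c * (ν i : Measure X) E) :
    (μ : Measure X) F ≤ c * (μ : Measure X) E :=
  calc (μ : Measure X) F
      ≤ l.liminf fun i ↦ (ν i : Measure X) F :=
        ProbabilityMeasure.le_liminf_measure_open_of_tendsto hν hF
    _ ≤ l.limsup fun i ↦ (ν i : Measure X) F := liminf_le_limsup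
    _ ≤ l.limsup fun i ↦ c * (ν i : Measure X) E := limsup_le_limsup h
    _ = c * l.limsup fun i ↦ (ν i : Measure X) E :=
        ENNReal.limsup_const_mul_of_ne_top ENNReal.coe_ne_top
    _ ≤ c * (μ : Measure X) E := by
        gcongr
        exact ProbabilityMeasure.limsup_measure_closed_le_of_tendsto hν hE

end WeakLimits

section OrbitMeasure

variable {G X : Type*} [MeasurableSpace G] [MeasurableSpace X] [VAdd G X]

/-- The distribution of `g +ᵥ x` for `g` chosen in `Q` according to the normalization of `m`: the
empirical measure of the orbit of `x` along the window `Q`. It is a probability measure only when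
`m Q` is neither `0` nor `∞`. -/
noncomputable def orbitMeasure (m : Measure G) (Q : Set G) (x : X) : Measure X :=
  m[|Q].map (· +ᵥ x)

variable [MeasurableVAdd G X]

theorem isProbabilityMeasure_orbitMeasure {m : Measure G} {Q : Set G} (h0 : m Q ≠ 0)
    (htop : m Q ≠ ∞) (x : X) : IsProbabilityMeasure (orbitMeasure m Q x) :=
  have := cond_isProbabilityMeasure_of_finite h0 htop
  Measure.isProbabilityMeasure_map (measurable_vadd_const x).aemeasurable

theorem orbitMeasure_apply (m : Measure G) (Q : Set G) (x : X) {A : Set X} (hA : MeasurableSet A) :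
    orbitMeasure m Q x A = (m Q)⁻¹ * m (Q ∩ {g | g +ᵥ x ∈ A}) := by
  rw [orbitMeasure, Measure.map_apply (measurable_vadd_const x) hA,
    cond_apply' (measurable_vadd_const x hA)]
  rfl

theorem integral_orbitMeasure {E : Type*} [NormedAddCommGroup E] [NormedSpace ℝ E]
    (m : Measure G) (Q : Set G) (x : X) {f : X → E} (hf : StronglyMeasurable f) :
    ∫ z, f z ∂orbitMeasure m Q x = ⨍ g in Q, f (g +ᵥ x) ∂m := by
  rw [orbitMeasure, integral_map (measurable_vadd_const x).aemeasurable hf.aestronglyMeasurable,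
    setAverage_eq', ProbabilityTheory.cond]

end OrbitMeasure

section InvariantLimits

variable {G X ι : Type*} [AddGroup G] [MeasurableSpace G] [MeasurableAdd G] [AddAction G X]
  [MeasurableSpace X] [MeasurableVAdd G X] {m : Measure G} [m.IsAddLeftInvariant]
  {l : Filter ι} {Q : ι → Set G}

/-- Pushing forward by `g` translates the window to `g +ᵥ Q i`. -/
theorem tendsto_integral_comp_vadd_sub_orbitMeasure [TopologicalSpace X]
    [OpensMeasurableSpace X] [ContinuousConstVAdd G X] (hQ : IsAddFoelner G m l Q) (x : ι → X)
    (f : X →ᵇ ℝ) (g : G) :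
    Tendsto (fun i ↦ ∫ z, f (g +ᵥ z) ∂orbitMeasure m (Q i) (x i) -
      ∫ z, f z ∂orbitMeasure m (Q i) (x i)) l (𝓝 0) := by
  have hf : StronglyMeasurable f := f.continuous.measurable.stronglyMeasurable
  have hfg : StronglyMeasurable fun z ↦ f (g +ᵥ z) :=
    (f.continuous.comp (continuous_const_vadd g)).measurable.stronglyMeasurable
  simp only [integral_orbitMeasure _ _ _ hf, integral_orbitMeasure _ _ _ hfg, ← add_vadd]
  exact tendsto_setAverage_comp_vadd_sub_setAverage hQ
    (fun i ↦ (hf.comp_measurable (measurable_vadd_const (x i))).aestronglyMeasurable)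
    (fun i h ↦ f.norm_coe_le_norm (h +ᵥ x i)) g

theorem vaddInvariantMeasure_of_tendsto_orbitMeasure [TopologicalSpace X] [HasOuterApproxClosed X]
    [BorelSpace X] [ContinuousConstVAdd G X] [l.NeBot] (hQ : IsAddFoelner G m l Q) {x : ι → X}
    {ν : ι → ProbabilityMeasure X} (hν : ∀ i, (ν i : Measure X) = orbitMeasure m (Q i) (x i))
    {μ : ProbabilityMeasure X} (hμ : Tendsto ν l (𝓝 μ)) :
    VAddInvariantMeasure G X (μ : Measure X) where
  measure_preimage_vadd g A hA := by
    have map_eq : (μ : Measure X).map (g +ᵥ ·) = μ :=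
      map_eq_self_of_tendsto (continuous_const_vadd g) hμ fun f ↦ by
        simpa only [hν] using tendsto_integral_comp_vadd_sub_orbitMeasure hQ x f g
    rw [← Measure.map_apply (measurable_const_vadd g) hA, map_eq]

theorem exists_invariant_measure_open_le_mul_measure_closed [TopologicalSpace X] [T2Space X]
    [CompactSpace X] [HasOuterApproxClosed X] [BorelSpace X] [ContinuousConstVAdd G X]
    [l.NeBot] (hQ : IsAddFoelner G m l Q) (h0 : ∀ i, m (Q i) ≠ 0) (htop : ∀ i, m (Q i) ≠ ∞)
    {E F : Set X} (hE : IsClosed E) (hF : IsOpen F) {c : ℝ≥0} {x : ι → X}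
    (hx : ∀ i, m (Q i ∩ {g | g +ᵥ x i ∈ F}) ≤ c * m (Q i ∩ {g | g +ᵥ x i ∈ E})) :
    ∃ μ : Measure X, IsProbabilityMeasure μ ∧ VAddInvariantMeasure G X μ ∧ μ F ≤ c * μ E := by
  let ν (i : ι) : ProbabilityMeasure X :=
    ⟨orbitMeasure m (Q i) (x i), isProbabilityMeasure_orbitMeasure (h0 i) (htop i) (x i)⟩
  let U := Ultrafilter.of l
  obtain ⟨μ, hμ⟩ : ∃ μ, Tendsto ν U (𝓝 μ) := ⟨_, (U.map ν).le_nhds_lim⟩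
  refine ⟨μ, inferInstance, vaddInvariantMeasure_of_tendsto_orbitMeasure
    (hQ.mono (Ultrafilter.of_le l)) (fun _ ↦ rfl) hμ,
    measure_open_le_mul_measure_closed_of_tendsto hE hF hμ (.of_forall fun i ↦ ?_)⟩
  calc orbitMeasure m (Q i) (x i) F
      = (m (Q i))⁻¹ * m (Q i ∩ {g | g +ᵥ x i ∈ F}) := orbitMeasure_apply _ _ _ hF.measurableSet
    _ ≤ (m (Q i))⁻¹ * (c * m (Q i ∩ {g | g +ᵥ x i ∈ E})) := by gcongr; exact hx i
    _ = c * orbitMeasure m (Q i) (x i) E := by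
        rw [orbitMeasure_apply _ _ _ hE.measurableSet, mul_left_comm]

theorem uniform_orbit_frequency_comparison_general [TopologicalSpace X] [T2Space X]
    [CompactSpace X] [HasOuterApproxClosed X] [BorelSpace X] [ContinuousConstVAdd G X]
    (hQ : IsAddFoelner G m l Q) {E F : Set X} (hE : IsClosed E) (hF : IsOpen F) {c : ℝ≥0}
    (hEF : ∀ μ : Measure X, IsProbabilityMeasure μ → VAddInvariantMeasure G X μ → c * μ E < μ F) :
    ∀ᶠ i in l, ∀ x : X, c * m (Q i ∩ {g | g +ᵥ x ∈ E}) < m (Q i ∩ {g | g +ᵥ x ∈ F}) := by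
  by_contra hfail
  let Bad (i : ι) : Prop := (m (Q i) ≠ 0 ∧ m (Q i) ≠ ∞) ∧
    ∃ x : X, m (Q i ∩ {g | g +ᵥ x ∈ F}) ≤ c * m (Q i ∩ {g | g +ᵥ x ∈ E})
  have frequently_bad : ∃ᶠ i in l, Bad i := by
    refine ((not_eventually.1 hfail).and_eventually
      (hQ.eventually_meas_ne_zero.and hQ.eventually_meas_ne_top)).mono fun i hi ↦ ⟨hi.2, ?_⟩
    simpa only [not_forall, not_lt] using hi.1
  have : (comap ((↑) : {i // Bad i} → ι) l).NeBot :=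
    comap_neBot_iff_frequently.2 (by simpa using frequently_bad)
  choose x hx using fun i : {i // Bad i} ↦ i.2.2
  obtain ⟨μ, hprob, hinv, hle⟩ := exists_invariant_measure_open_le_mul_measure_closed
    (hQ.comp_tendsto tendsto_comap) (fun i ↦ i.2.1.1) (fun i ↦ i.2.1.2) hE hF hx
  exact (hEF μ hprob hinv).not_ge hle

end InvariantLimits

section Cubes

theorem card_vadd_symmDiff {G Y : Type*} [AddGroup G] [AddAction G Y] [DecidableEq Y] (g : G)
    (Q : Finset Y) :
    (#((g +ᵥ Q) ∆ Q) : ℝ) = 2 * (#Q - #((g +ᵥ Q) ∩ Q)) := by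
  have card_symmDiff : #((g +ᵥ Q) ∆ Q) = #((g +ᵥ Q) \ Q) + #(Q \ (g +ᵥ Q)) := by
    rw [symmDiff_def, Finset.sup_eq_union, Finset.card_union_of_disjoint disjoint_sdiff_sdiff]
  have card_left := Finset.card_sdiff_add_card_inter (g +ᵥ Q) Q
  have card_right := Finset.card_sdiff_add_card_inter Q (g +ᵥ Q)
  rw [Finset.card_vadd_finset] at card_left
  rw [Finset.inter_comm] at card_right
  rify at card_symmDiff card_left card_right
  linarith

theorem isAddFoelner_count_of_tendsto_card_inter {G Y ι : Type*} [AddGroup G] [AddAction G Y]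
    [DecidableEq Y] [MeasurableSpace Y] [MeasurableSingletonClass Y] {l : Filter ι}
    {Q : ι → Finset Y}
    (h : ∀ g : G, Tendsto (fun i ↦ (#((g +ᵥ Q i) ∩ Q i) : ℝ) / #(Q i)) l (𝓝 1)) :
    IsAddFoelner G Measure.count l fun i ↦ (Q i : Set Y) := by
  have eventually_nonempty : ∀ᶠ i in l, (Q i).Nonempty := by
    filter_upwards [(h 0).eventually_ne one_ne_zero] with i hi
    -- An empty window would have the ratio `0 / 0 = 0`.
    exact Finset.nonempty_iff_ne_empty.2 fun hempty ↦ hi (by simp [hempty])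
  refine ⟨Eventually.of_forall fun i ↦ (Q i).measurableSet, ?_, by simp, fun g ↦ ?_⟩
  · filter_upwards [eventually_nonempty] with i hi
    simpa using hi.ne_empty
  · have ratio : Tendsto (fun i ↦ ENNReal.ofReal (2 * (1 - #((g +ᵥ Q i) ∩ Q i) / #(Q i)))) l
        (𝓝 0) := by
      simpa using ENNReal.tendsto_ofReal (((h g).const_sub 1).const_mul 2)
    refine ratio.congr' ?_
    filter_upwards [eventually_nonempty] with i hi
    have card_pos : (0 : ℝ) < #(Q i) := mod_cast hi.card_pos
    rw [← Finset.coe_vadd_finset, ← Finset.coe_symmDiff, Measure.count_apply_finset,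
      Measure.count_apply_finset, ← ENNReal.ofReal_natCast, ← ENNReal.ofReal_natCast,
      ← ENNReal.ofReal_div_of_pos card_pos, card_vadd_symmDiff, one_sub_div card_pos.ne',
      mul_div_assoc]

theorem isAddFoelner_count_piFinset {κ ι : Type*} [Fintype κ] [DecidableEq κ] {G : κ → Type*}
    [∀ i, AddGroup (G i)] [∀ i, DecidableEq (G i)] [∀ i, MeasurableSpace (G i)]
    [∀ i, MeasurableSingletonClass (G i)] {l : Filter ι} {Q : ι → ∀ i, Finset (G i)}
    (h : ∀ i (g : G i), Tendsto (fun j ↦ (#((g +ᵥ Q j i) ∩ Q j i) : ℝ) / #(Q j i)) l (𝓝 1)) :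
    IsAddFoelner (∀ i, G i) Measure.count l
      fun j ↦ (Fintype.piFinset (Q j) : Set (∀ i, G i)) := by
  refine isAddFoelner_count_of_tendsto_card_inter fun g ↦ ?_
  simpa [← Fintype.piFinset_vadd_finset, ← Fintype.piFinset_inter, Finset.prod_div_distrib] using
    tendsto_finsetProd Finset.univ fun i _ ↦ h i (g i)

theorem card_vadd_Ico_inter_Ico (n : ℤ) (M : ℕ) :
    #((n +ᵥ Finset.Ico 0 (M : ℤ)) ∩ Finset.Ico 0 (M : ℤ)) = M - n.natAbs := by
  have vadd_Ico : n +ᵥ Finset.Ico 0 (M : ℤ) = Finset.Ico n (n + M) := by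
    ext m
    simp [← Finset.neg_vadd_mem_iff]
  rw [vadd_Ico, Finset.Ico_inter_Ico, Int.card_Ico]
  omega

theorem tendsto_card_vadd_Ico_inter_Ico (n : ℤ) :
    Tendsto (fun M : ℕ ↦
      (#((n +ᵥ Finset.Ico 0 (M : ℤ)) ∩ Finset.Ico 0 (M : ℤ)) : ℝ) / #(Finset.Ico 0 (M : ℤ)))
      atTop (𝓝 1) := by
  have ratio : Tendsto (fun M : ℕ ↦ 1 - (n.natAbs : ℝ) / M) atTop (𝓝 1) := by
    simpa using (tendsto_const_div_atTop_nhds_zero_nat (n.natAbs : ℝ)).const_sub 1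
  refine ratio.congr' ?_
  filter_upwards [eventually_ge_atTop n.natAbs, eventually_gt_atTop 0] with M hn hM
  rw [card_vadd_Ico_inter_Ico, Nat.cast_sub hn, Int.card_Ico, sub_zero, Int.toNat_natCast,
    sub_div, div_self (by positivity)]

/-- The discrete cube `{0, …, M - 1}^κ` in `ℤ^κ`, the window along which orbits are sampled. -/
noncomputable def discreteCube (κ : Type*) [Fintype κ] [DecidableEq κ] (M : ℕ) : Finset (κ → ℤ) :=
  Fintype.piFinset fun _ ↦ Finset.Ico 0 (M : ℤ)

variable {κ : Type*} [Fintype κ] [DecidableEq κ]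

theorem isAddFoelner_count_discreteCube :
    IsAddFoelner (κ → ℤ) Measure.count atTop fun M ↦ (discreteCube κ M : Set (κ → ℤ)) :=
  isAddFoelner_count_piFinset fun _ ↦ tendsto_card_vadd_Ico_inter_Ico

theorem count_discreteCube_inter (M : ℕ) (S : Set (κ → ℤ)) :
    Measure.count ((discreteCube κ M : Set (κ → ℤ)) ∩ S) =
      Nat.card {m : κ → ℤ // (∀ i, 0 ≤ m i ∧ m i < (M : ℤ)) ∧ m ∈ S} := by
  have hfin : ((discreteCube κ M : Set (κ → ℤ)) ∩ S).Finite :=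
    (discreteCube κ M).finite_toSet.inter_of_left S
  have inter_eq : (discreteCube κ M : Set (κ → ℤ)) ∩ S =
      {m | (∀ i, 0 ≤ m i ∧ m i < (M : ℤ)) ∧ m ∈ S} := by
    ext m
    simp [discreteCube]
  rw [Measure.count_apply_finite _ hfin, ← Set.ncard_eq_toFinset_card _ hfin, inter_eq]
  rfl

end Cubes

/-- let `T` be a `ℤ^d`-action on a nonempty compact metric space `X`,
`E' ⊆ X` closed, `F ⊆ X` open, with `4·μ(E') < μ(F)` for every `T`-invariant Borel
probability measure `μ`.  Then there is `N ∈ ℕ` such that for all `M > N` and all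
`x ∈ X`, `4·#{m ∈ {0,…,M-1}^d : T^{-m} x ∈ E'} < #{m ∈ {0,…,M-1}^d : T^{-m} x ∈ F}`. -/
theorem uniform_orbit_frequency_comparison {X : Type*} [MetricSpace X] [CompactSpace X]
    [Nonempty X] [MeasurableSpace X] [BorelSpace X]
    (d : ℕ) (hd : 1 ≤ d) (T : (Fin d → ℤ) → X → X)
    (hTc : ∀ n, Continuous (T n)) (hT0 : ∀ x, T 0 x = x)
    (hTadd : ∀ m n x, T (m + n) x = T m (T n x))
    (E' F : Set X) (hE' : IsClosed E') (hF : IsOpen F)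
    (hmeas : ∀ μ : Measure X, IsProbabilityMeasure μ →
      (∀ (n : Fin d → ℤ) (B : Set X), MeasurableSet B → μ (T n '' B) = μ B) →
      4 * μ E' < μ F) :
    ∃ N : ℕ, ∀ M : ℕ, N < M → ∀ x : X,
      4 * Nat.card {m : Fin d → ℤ // (∀ i, 0 ≤ m i ∧ m i < (M : ℤ)) ∧ T (-m) x ∈ E'} <
        Nat.card {m : Fin d → ℤ // (∀ i, 0 ≤ m i ∧ m i < (M : ℤ)) ∧ T (-m) x ∈ F} := by
  -- As `ℤ^d` is commutative, `m ↦ T (-m)` is again an action, with the same invariant measures.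
  let : AddAction (Fin d → ℤ) X :=
    { vadd := fun m x ↦ T (-m) x
      zero_vadd := fun x ↦ show T (-0) x = x by rw [neg_zero, hT0]
      add_vadd := fun m n x ↦ show T (-(m + n)) x = T (-m) (T (-n) x) by rw [neg_add, hTadd] }
  have : ContinuousConstVAdd (Fin d → ℤ) X := ⟨fun m ↦ hTc (-m)⟩
  have : MeasurableVAdd (Fin d → ℤ) X := { measurable_vadd_const := fun _ ↦ .of_discrete }
  have image_eq_vadd (n : Fin d → ℤ) (B : Set X) : T n '' B = -n +ᵥ B :=
    show T n '' B = T (- -n) '' B by rw [neg_neg]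
  have eventually_lt := uniform_orbit_frequency_comparison_general
    (isAddFoelner_count_discreteCube (κ := Fin d)) hE' hF (c := 4) fun μ hprob hinv ↦
      hmeas μ hprob fun n B _ ↦ by rw [image_eq_vadd, measure_vadd]
  obtain ⟨N, hN⟩ := eventually_atTop.1 eventually_lt
  refine ⟨N, fun M hM x ↦ ?_⟩
  have := hN M hM.le x
  simp only [count_discreteCube_inter] at this
  exact_mod_cast this
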